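/- For every n ≥ 1, the total number of 2-colored partitions of K_3 × P_n (summed over all sizes i) equals 8^n; that is, Σ_{i≥1} c(n,i) = 8^n. -/

import Mathlib

open SimpleGraph Polynomial

/-- A 2-colored partition of a simple graph `G`: a partition of the vertex set into
nonempty parts, each inducing a connected subgraph, together with an assignment of one
of two colors to each part such that distinct parts joined by an edge get different colors. -/
structure TwoColoredPartition {V : Type*} (G : SimpleGraph V) where
  parts : Set (Set V)
  nonempty : ∀ p ∈ parts, p.Nonempty
  covers : ∀ v : V, ∃ p, p ∈ parts ∧ v ∈ p
  disj : ∀ p ∈ parts, ∀ q ∈ parts, p ≠ q → Disjoint p q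
  conn : ∀ p ∈ parts, (G.induce p).Connected
  color : parts → Fin 2
  proper : ∀ p q : parts, p ≠ q →
    (∃ v ∈ (p : Set V), ∃ w ∈ (q : Set V), G.Adj v w) → color p ≠ color q

/-- The size of a 2-colored partition: its number of parts. -/
noncomputable def TwoColoredPartition.size {V : Type*} {G : SimpleGraph V}
    (T : TwoColoredPartition G) : ℕ :=
  T.parts.ncard

/-- `c n i` is the number of 2-colored partitions of `K₃ × Pₙ` of size `i`. -/
noncomputable def c (n i : ℕ) : ℕ :=
  Nat.card {T : TwoColoredPartition ((⊤ : SimpleGraph (Fin 3)) □ pathGraph n) // T.size = i}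

/-- `tpoly n = ∑_{i ≥ 1} c(n,i) yⁱ ∈ ℤ[y]`. -/
noncomputable def tpoly (n : ℕ) : Polynomial ℤ :=
  ∑ᶠ (i : ℕ) (_ : 1 ≤ i), Polynomial.monomial i (c n i : ℤ)

namespace TwoColoredPartition

variable {V : Type*} {G : SimpleGraph V}

/-- The subgraph of monochromatic edges. -/
def mono (G : SimpleGraph V) (χ : V → Fin 2) : SimpleGraph V where
  Adj v w := G.Adj v w ∧ χ v = χ w
  symm := ⟨fun _ _ h => ⟨h.1.symm, h.2.symm⟩⟩
  loopless := ⟨fun _ h => G.irrefl h.1⟩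

/-- The monochromatic component of `v`. -/
def comp (G : SimpleGraph V) (χ : V → Fin 2) (v : V) : Set V :=
  {w | (mono G χ).Reachable v w}

/-- The vertex coloring induced by a 2-colored partition. -/
noncomputable def vcol (T : TwoColoredPartition G) (v : V) : Fin 2 :=
  T.color ⟨(T.covers v).choose, (T.covers v).choose_spec.1⟩

theorem vcol_eq (T : TwoColoredPartition G) {v : V} (p : T.parts) (hv : v ∈ (p : Set V)) :
    T.vcol v = T.color p := by
  unfold vcol
  congr 1
  apply Subtype.ext
  by_contra h
  exact Set.disjoint_left.1 (T.disj _ (T.covers v).choose_spec.1 _ p.2 h)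
    (T.covers v).choose_spec.2 hv

theorem part_eq (T : TwoColoredPartition G) {v : V} (p : T.parts) (hv : v ∈ (p : Set V)) :
    (p : Set V) = comp G T.vcol v := by
  ext w
  constructor
  · intro hw
    have h := (T.conn p p.2).preconnected ⟨v, hv⟩ ⟨w, hw⟩
    let f : G.induce (p : Set V) →g mono G T.vcol :=
      { toFun := fun x => x.1
        map_rel' := fun {a b} hab => ⟨hab, by rw [T.vcol_eq p a.2, T.vcol_eq p b.2]⟩ }
    exact h.map f
  · rintro ⟨W⟩
    induction W with
    | nil => exact hv
    | @cons a b d hab W ih =>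
      apply ih
      obtain ⟨q, hq, hbq⟩ := T.covers b
      by_contra hb
      have hne : p ≠ ⟨q, hq⟩ := by
        rintro rfl
        exact hb hbq
      apply T.proper p ⟨q, hq⟩ hne ⟨a, hv, b, hbq, hab.1⟩
      rw [← T.vcol_eq p hv, ← T.vcol_eq ⟨q, hq⟩ hbq]
      exact hab.2

theorem parts_eq (T : TwoColoredPartition G) : T.parts = Set.range (comp G T.vcol) := by
  ext p
  constructor
  · intro hp
    obtain ⟨v, hv⟩ := T.nonempty p hp
    exact ⟨v, (T.part_eq ⟨p, hp⟩ hv).symm⟩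
  · rintro ⟨v, rfl⟩
    obtain ⟨p, hp, hv⟩ := T.covers v
    rw [← T.part_eq ⟨p, hp⟩ hv]
    exact hp

theorem vcol_injective : Function.Injective (vcol (G := G)) := by
  intro S T h
  have hp : S.parts = T.parts := by rw [S.parts_eq, T.parts_eq, h]
  have hc : ∀ p (h1 : p ∈ S.parts) (h2 : p ∈ T.parts), S.color ⟨p, h1⟩ = T.color ⟨p, h2⟩ := by
    intro p h1 h2
    obtain ⟨v, hv⟩ := S.nonempty p h1
    rw [← S.vcol_eq ⟨p, h1⟩ hv, ← T.vcol_eq ⟨p, h2⟩ hv, h]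
  clear h
  cases S with
  | mk P _ _ _ _ cS _ =>
  cases T with
  | mk Q _ _ _ _ cT _ =>
  dsimp only at hp hc
  subst hp
  have : cS = cT := funext fun p => hc p.1 p.2 p.2
  subst this
  rfl

theorem color_of_reachable {χ : V → Fin 2} {v w : V} (h : (mono G χ).Reachable v w) :
    χ v = χ w := by
  obtain ⟨W⟩ := h
  induction W with
  | nil => rfl
  | cons hab _ ih => exact hab.2.trans ih

theorem comp_eq {χ : V → Fin 2} {v w : V} (h : (mono G χ).Reachable v w) :
    comp G χ v = comp G χ w := by
  ext x
  exact ⟨fun hx => h.symm.trans hx, fun hx => h.trans hx⟩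

theorem comp_connected (χ : V → Fin 2) (v : V) : (G.induce (comp G χ v)).Connected := by
  have key : ∀ {a b : V} (W : (mono G χ).Walk a b) (ha : a ∈ comp G χ v)
      (hb : b ∈ comp G χ v), (G.induce (comp G χ v)).Reachable ⟨a, ha⟩ ⟨b, hb⟩ := by
    intro a b W
    induction W with
    | nil => intro _ _; exact Reachable.refl _
    | @cons a b d hab W ih =>
      intro ha hd
      have hb : b ∈ comp G χ v := Reachable.trans ha hab.reachable
      have e : (G.induce (comp G χ v)).Adj ⟨a, ha⟩ ⟨b, hb⟩ := hab.1
      exact e.reachable.trans (ih hb hd)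
  have hv : v ∈ comp G χ v := Reachable.refl _
  have : Nonempty (comp G χ v) := ⟨⟨v, hv⟩⟩
  refine Connected.mk ?_
  rintro ⟨a, ha⟩ ⟨b, hb⟩
  obtain ⟨W⟩ : (mono G χ).Reachable a b := Reachable.trans (Reachable.symm ha) hb
  exact key W ha hb

/-- The 2-colored partition into monochromatic components. -/
noncomputable def ofCol (G : SimpleGraph V) (χ : V → Fin 2) : TwoColoredPartition G where
  parts := Set.range (comp G χ)
  nonempty := by
    rintro _ ⟨v, rfl⟩
    exact ⟨v, Reachable.refl _⟩
  covers v := ⟨_, ⟨v, rfl⟩, Reachable.refl _⟩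
  disj := by
    rintro _ ⟨v, rfl⟩ _ ⟨w, rfl⟩ hne
    rw [Set.disjoint_left]
    intro x hx hy
    exact hne ((comp_eq hx).trans (comp_eq hy).symm)
  conn := by
    rintro _ ⟨v, rfl⟩
    exact comp_connected χ v
  color p := χ p.2.choose
  proper := by
    rintro p q hne ⟨v, hv, w, hw, hvw⟩ hc
    apply hne
    rw [← p.2.choose_spec] at hv
    rw [← q.2.choose_spec] at hw
    have h : χ v = χ w :=
      (color_of_reachable hv).symm.trans (hc.trans (color_of_reachable hw))
    have e : (mono G χ).Adj v w := ⟨hvw, h⟩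
    apply Subtype.ext
    rw [← p.2.choose_spec, ← q.2.choose_spec, comp_eq hv, comp_eq hw, comp_eq e.reachable]

theorem vcol_ofCol (χ : V → Fin 2) : (ofCol G χ).vcol = χ := by
  funext v
  have hv : v ∈ comp G χ v := Reachable.refl _
  rw [(ofCol G χ).vcol_eq ⟨comp G χ v, ⟨v, rfl⟩⟩ hv]
  have hp : comp G χ v ∈ Set.range (comp G χ) := ⟨v, rfl⟩
  change χ hp.choose = χ v
  apply color_of_reachable (G := G)
  have := hp.choose_spec
  change v ∈ comp G χ hp.choose
  rw [this]
  exact hv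

theorem vcol_bijective : Function.Bijective (vcol (G := G)) :=
  ⟨vcol_injective, fun χ => ⟨ofCol G χ, vcol_ofCol χ⟩⟩

end TwoColoredPartition

/-- For every `n ≥ 1`, the total number of 2-colored partitions of `K₃ × Pₙ` is `8ⁿ`. -/
theorem total_count_K3_times_path (n : ℕ) (hn : 1 ≤ n) :
    ∑ᶠ (i : ℕ) (_ : 1 ≤ i), c n i = 8 ^ n := by
  classical
  let G := (⊤ : SimpleGraph (Fin 3)) □ pathGraph n
  let e : TwoColoredPartition G ≃ (Fin 3 × Fin n → Fin 2) := Equiv.ofBijective _ TwoColoredPartition.vcol_bijective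
  letI : Fintype (TwoColoredPartition G) := Fintype.ofEquiv _ e.symm
  have hcard : Fintype.card (TwoColoredPartition G) = 8 ^ n := by
    rw [Fintype.card_congr e]
    simp [pow_mul]
  have hc : ∀ i, c n i = (Finset.univ.filter fun T : TwoColoredPartition G => T.size = i).card := by
    intro i
    unfold c
    rw [Nat.card_eq_fintype_card, Fintype.card_subtype]
  have hpos : ∀ T : TwoColoredPartition G, 1 ≤ T.size := by
    intro T
    obtain ⟨p, hp, -⟩ := T.covers (0, ⟨0, hn⟩)
    exact (Set.ncard_pos (Set.toFinite _)).2 ⟨p, hp⟩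
  have h1 : ∀ i, (∑ᶠ (_ : 1 ≤ i), c n i) = c n i := by
    intro i
    by_cases hi : 1 ≤ i
    · simp [hi]
    · have : c n i = 0 := by
        rw [hc, Finset.card_eq_zero, Finset.filter_eq_empty_iff]
        intro T _ h
        exact hi (h ▸ hpos T)
      simp [hi, this]
  simp_rw [h1]
  rw [finsum_eq_sum_of_support_subset (s := Finset.univ.image
    (fun T : TwoColoredPartition G => T.size)), ← hcard]
  · simp_rw [hc]
    exact (Finset.card_eq_sum_card_image _ _).symm
  · intro i hi
    rw [Function.mem_support, hc, Finset.card_ne_zero] at hi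
    obtain ⟨T, hT⟩ := hi
    simp only [Finset.coe_image, Finset.coe_univ, Set.image_univ]
    exact ⟨T, (Finset.mem_filter.1 hT).2⟩
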